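/- For every real u with 0.841 < u < 1, the square-network quantum distribution P_Q^□ is nonlocal on the square network: there do not exist types Λ₁, Λ₂, Λ₃, Λ₄ with probability distributions μ₁, …, μ₄ and response kernels p₁(a₁|λ₄,λ₁), p₂(a₂|λ₁,λ₂), p₃(a₃|λ₂,λ₃), p₄(a₄|λ₃,λ₄), each output ranging over {0, 1₀, 1₁, 2}, such that for all outcomes P_Q^□(a₁,a₂,a₃,a₄) equals the expectation over independently sampled λ₁,…,λ₄ of the product p₁(a₁|λ₄,λ₁)·p₂(a₂|λ₁,λ₂)·p₃(a₃|λ₂,λ₃)·p₄(a₄|λ₃,λ₄). -/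

import Mathlib

open MeasureTheory

noncomputable def uco (u : ℝ) : Fin 2 → ℝ := ![u, Real.sqrt (1 - u ^ 2)]
noncomputable def vco (u : ℝ) : Fin 2 → ℝ := ![Real.sqrt (1 - u ^ 2), -u]

inductive Outc where
  | zero : Outc
  | one : Fin 2 → Outc
  | two : Outc
  deriving DecidableEq, Fintype

noncomputable def psiPlus : Fin 2 → Fin 2 → ℝ := fun i j =>
  if i = 0 ∧ j = 1 then (Real.sqrt 2)⁻¹ else if i = 1 ∧ j = 0 then (Real.sqrt 2)⁻¹ else 0

noncomputable def basisVec (u : ℝ) : Outc → Fin 2 → Fin 2 → ℝ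
  | Outc.zero => fun l r => if l = 0 ∧ r = 0 then 1 else 0
  | Outc.one i => fun l r => if l = 0 ∧ r = 1 then uco u i else if l = 1 ∧ r = 0 then vco u i else 0
  | Outc.two => fun l r => if l = 1 ∧ r = 1 then 1 else 0

def finNext {N : ℕ} (k : Fin N) : Fin N := ⟨(k.val + 1) % N, Nat.mod_lt _ k.pos⟩

noncomputable def ringAmp (N : ℕ) (u : ℝ) (a : Fin N → Outc) : ℝ :=
  ∑ L : Fin N → Fin 2, ∑ R : Fin N → Fin 2,
    (∏ k, basisVec u (a k) (L k) (R k)) * ∏ k, psiPlus (R k) (L (finNext k))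

noncomputable def ringP (N : ℕ) (u : ℝ) (a : Fin N → Outc) : ℝ := ringAmp N u a ^ 2

/-!
Call the excess of an outcome `0`, `1ᵢ`, `2` the number `-1`, `0`, `1`. The total excess of a joint
outcome of nonzero quantum probability vanishes. In a local model reproducing the distribution, the
excess of a party is therefore almost surely a function of its two hidden variables, and averaging
the conservation law shows that it is the difference of two centred "tokens", each depending on one
hidden variable. The quantum correlations give the tokens variance `1/4`; as their differences lie
in `{-1, 0, 1}`, the tokens are `±1/2`.

All tokens are `1/2` with probability `1/16`, and jointly with party `k` answering `1₁` with
probability `u²/16`. If `X` parties answer `1₁`, then `X - 2` is positive only for the outcome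
`1₁1₁1₁1₁` and for those obtained from it by turning one answer into `1₀`, so taking expectations on
the event that all tokens are `1/2` yields
`(4u² - 2)/16 ≤ 2 P(1₁, 1₁, 1₁, 1₁) + ∑ₖ P(1₀ at k, 1₁ elsewhere)`.
The quantum distribution satisfies this only if `u⁴ ≤ 1/2`.
-/

open scoped Finset

lemma finNext_bijective {N : ℕ} : Function.Bijective (finNext : Fin N → Fin N) := by
  refine Finite.injective_iff_bijective.1 fun i j hij => ?_
  have h : i.val + 1 ≡ j.val + 1 [MOD N] := congrArg Fin.val hij
  exact Fin.ext ((Nat.ModEq.add_right_cancel' 1 h).eq_of_lt_of_lt i.isLt j.isLt)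

lemma finNext_four (k : Fin 4) : finNext k = k + 1 := rfl

/-- The number of ones in the two-qubit basis vector labelled by an outcome, minus one. -/
def Outc.excess : Outc → ℤ
  | .zero => -1
  | .one _ => 0
  | .two => 1

lemma Outc.sum_univ {M : Type*} [AddCommMonoid M] (f : Outc → M) :
    ∑ a, f a = f .zero + f (.one 0) + f (.one 1) + f .two := by
  have huniv : (Finset.univ : Finset Outc) = {.zero, .one 0, .one 1, .two} := by decide
  simp [huniv, add_assoc]

lemma excess_eq_of_basisVec_ne_zero {u : ℝ} {a : Outc} {l r : Fin 2} (h : basisVec u a l r ≠ 0) :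
    a.excess = (l : ℤ) + (r : ℤ) - 1 := by
  rcases a with _ | i | _ <;> fin_cases l <;> fin_cases r <;> simp_all [basisVec, Outc.excess]

lemma psiPlus_eq_ite (r l : Fin 2) : psiPlus r l = if r = 1 - l then (√2)⁻¹ else 0 := by
  fin_cases r <;> fin_cases l <;> simp [psiPlus]

/-- The matrix through which a party acts on the ring: its indices are the qubits that the party
and its successor receive as their left inputs. The state `|ψ⁺⟩` makes the right qubit of a party
the opposite of the left qubit of its successor. -/
noncomputable def transfer (u : ℝ) (a : Outc) : Matrix (Fin 2) (Fin 2) ℝ :=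
  Matrix.of fun s t => basisVec u a s (1 - t)

lemma ringAmp_eq_sum_transfer (N : ℕ) (u : ℝ) (a : Fin N → Outc) :
    ringAmp N u a =
      (√2)⁻¹ ^ N * ∑ s : Fin N → Fin 2, ∏ k, transfer u (a k) (s k) (s (finNext k)) := by
  have hsource (b : Outc) (l l' : Fin 2) :
      ∑ r, basisVec u b l r * psiPlus r l' = (√2)⁻¹ * transfer u b l l' := by
    simp [psiPlus_eq_ite, transfer, mul_comm]
  have hconst : (√2)⁻¹ ^ N = ∏ _k : Fin N, (√2)⁻¹ := by simp
  simp only [ringAmp, Finset.mul_sum, hconst, ← Finset.prod_mul_distrib, ← hsource,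
    Finset.prod_univ_sum, Fintype.piFinset_univ]

lemma ringP_comp_perm {N : ℕ} (u : ℝ) (a : Fin N → Outc) {σ : Equiv.Perm (Fin N)}
    (hσ : ∀ k, σ (finNext k) = finNext (σ k)) : ringP N u (a ∘ σ) = ringP N u a := by
  rw [ringP, ringP, ringAmp_eq_sum_transfer, ringAmp_eq_sum_transfer,
    ← (σ.symm.arrowCongr (Equiv.refl (Fin 2))).sum_comp]
  congr! 3 with s
  simpa [hσ] using Equiv.prod_comp σ fun k => transfer u (a k) (s k) (s (finNext k))

lemma ringP_eq_zero_of_sum_excess_ne_zero {N : ℕ} (u : ℝ) (a : Fin N → Outc)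
    (ha : ∑ k, (a k).excess ≠ 0) : ringP N u a = 0 := by
  rw [ringP, ringAmp_eq_sum_transfer, Finset.sum_eq_zero fun s _ => ?_]
  · simp
  by_contra hs
  have hexcess (k) : (a k).excess = (s k : ℤ) - s (finNext k) := by
    have h := excess_eq_of_basisVec_ne_zero (Finset.prod_ne_zero_iff.1 hs k (Finset.mem_univ k))
    have hflip : ∀ t : Fin 2, ((1 - t : Fin 2) : ℤ) = 1 - t := by decide
    rw [h, hflip]
    ring
  refine ha ?_
  simp only [hexcess, Finset.sum_sub_distrib,
    finNext_bijective.sum_comp fun k => ((s k : ℕ) : ℤ), sub_self]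

section TransferMatrix

open Matrix

lemma transfer_zero (u : ℝ) : transfer u .zero = !![0, 1; 0, 0] := by
  ext s t; fin_cases s <;> fin_cases t <;> simp [transfer, basisVec]

lemma transfer_one (u : ℝ) (i : Fin 2) : transfer u (.one i) = !![uco u i, 0; 0, vco u i] := by
  ext s t; fin_cases s <;> fin_cases t <;> simp [transfer, basisVec]

lemma transfer_two (u : ℝ) : transfer u .two = !![0, 0; 1, 0] := by
  ext s t; fin_cases s <;> fin_cases t <;> simp [transfer, basisVec]

lemma sum_univ_pi_fin_succ {α M : Type*} [Fintype α] [AddCommMonoid M] {n : ℕ}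
    (f : (Fin (n + 1) → α) → M) : ∑ x, f x = ∑ a, ∑ y : Fin n → α, f (vecCons a y) := by
  rw [← (Fin.consEquiv fun _ => α).sum_comp, Fintype.sum_prod_type]
  rfl

lemma sum_univ_pi_fin_four {α M : Type*} [Fintype α] [AddCommMonoid M] (f : (Fin 4 → α) → M) :
    ∑ x, f x = ∑ a, ∑ b, ∑ c, ∑ d, f ![a, b, c, d] := by
  simp only [sum_univ_pi_fin_succ, Fintype.sum_unique]
  rfl

lemma ringAmp_four (u : ℝ) (a b c d : Outc) :
    ringAmp 4 u ![a, b, c, d] =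
      (transfer u a * transfer u b * transfer u c * transfer u d).trace / 4 := by
  have hsqrt : (√2)⁻¹ ^ 4 = (1 / 4 : ℝ) := by
    rw [inv_pow, show √2 ^ 4 = (√2 ^ 2) ^ 2 by ring, Real.sq_sqrt zero_le_two]
    norm_num
  rw [ringAmp_eq_sum_transfer, hsqrt, sum_univ_pi_fin_four]
  simp only [Fin.prod_univ_four, Fin.sum_univ_two, trace_fin_two, mul_apply, finNext_four,
    cons_val_zero, cons_val_one, cons_val, zero_add, Fin.reduceAdd]
  ring

variable {u : ℝ}

lemma uco_sq_add_uco_sq (hu : u ^ 2 ≤ 1) : uco u 0 ^ 2 + uco u 1 ^ 2 = 1 := by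
  simp [uco, Real.sq_sqrt (sub_nonneg.2 hu)]

lemma vco_sq_add_vco_sq (hu : u ^ 2 ≤ 1) : vco u 0 ^ 2 + vco u 1 ^ 2 = 1 := by
  simp [vco, Real.sq_sqrt (sub_nonneg.2 hu)]

lemma uco_mul_vco_add_uco_mul_vco (u : ℝ) : uco u 0 * vco u 0 + uco u 1 * vco u 1 = 0 := by
  simp only [uco, vco, cons_val_zero, cons_val_one]
  ring

lemma uco_sq_add_vco_sq (hu : u ^ 2 ≤ 1) (i : Fin 2) : uco u i ^ 2 + vco u i ^ 2 = 1 := by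
  fin_cases i <;> simp [uco, vco, Real.sq_sqrt (sub_nonneg.2 hu)]

lemma sum_trace_mul_transfer_sq (hu : u ^ 2 ≤ 1) (X : Matrix (Fin 2) (Fin 2) ℝ) :
    ∑ a, (X * transfer u a).trace ^ 2 = (X * Xᵀ).trace := by
  simp only [Outc.sum_univ, transfer_zero, transfer_one, transfer_two, trace_fin_two, mul_apply,
    Fin.sum_univ_two, transpose_apply, of_apply, cons_val', cons_val_zero, cons_val_one,
    cons_val_fin_one]
  linear_combination X 0 0 ^ 2 * uco_sq_add_uco_sq hu + X 1 1 ^ 2 * vco_sq_add_vco_sq hu +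
    2 * X 0 0 * X 1 1 * uco_mul_vco_add_uco_mul_vco u

/-- The operator by which a party, through the statistic `f` of its outcome, acts on its right
qubit. -/
noncomputable def leftGram (u : ℝ) (f : Outc → ℝ) : Matrix (Fin 2) (Fin 2) ℝ :=
  ∑ a, f a • ((transfer u a)ᵀ * transfer u a)

/-- The operator by which a party, through the statistic `f` of its outcome, acts on its left
qubit. -/
noncomputable def rightGram (u : ℝ) (f : Outc → ℝ) : Matrix (Fin 2) (Fin 2) ℝ :=
  ∑ a, f a • (transfer u a * (transfer u a)ᵀ)

lemma leftGram_eq (u : ℝ) (f : Outc → ℝ) :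
    leftGram u f = diagonal ![f .two + f (.one 0) * uco u 0 ^ 2 + f (.one 1) * uco u 1 ^ 2,
      f .zero + f (.one 0) * vco u 0 ^ 2 + f (.one 1) * vco u 1 ^ 2] := by
  ext s t
  fin_cases s <;> fin_cases t <;>
    simp only [leftGram, Outc.sum_univ, transfer_zero, transfer_one, transfer_two,
      Matrix.add_apply, Matrix.smul_apply, mul_apply, transpose_apply, Fin.sum_univ_two,
      Fin.zero_eta, Fin.mk_one, of_apply, cons_val', cons_val_zero, cons_val_one,
      cons_val_fin_one, smul_eq_mul, diagonal_apply, if_true, zero_ne_one, one_ne_zero,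
      if_false] <;>
    ring

lemma leftGram_single (u : ℝ) (i : Fin 2) :
    leftGram u (Pi.single (.one i) 1) = diagonal ![uco u i ^ 2, vco u i ^ 2] := by
  rw [leftGram_eq]
  fin_cases i <;> simp

lemma rightGram_eq (u : ℝ) (f : Outc → ℝ) :
    rightGram u f = diagonal ![f .zero + f (.one 0) * uco u 0 ^ 2 + f (.one 1) * uco u 1 ^ 2,
      f .two + f (.one 0) * vco u 0 ^ 2 + f (.one 1) * vco u 1 ^ 2] := by
  ext s t
  fin_cases s <;> fin_cases t <;>
    simp only [rightGram, Outc.sum_univ, transfer_zero, transfer_one, transfer_two,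
      Matrix.add_apply, Matrix.smul_apply, mul_apply, transpose_apply, Fin.sum_univ_two,
      Fin.zero_eta, Fin.mk_one, of_apply, cons_val', cons_val_zero, cons_val_one,
      cons_val_fin_one, smul_eq_mul, diagonal_apply, if_true, zero_ne_one, one_ne_zero,
      if_false] <;>
    ring

lemma rightGram_one (hu : u ^ 2 ≤ 1) : rightGram u 1 = diagonal fun _ => 2 := by
  rw [rightGram_eq]
  congr 1
  ext s
  fin_cases s <;>
    simp [add_assoc, uco_sq_add_uco_sq hu, vco_sq_add_vco_sq hu, one_add_one_eq_two]

lemma sum_ringP_four (hu : u ^ 2 ≤ 1) (a b : Outc) :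
    ∑ c, ∑ d, ringP 4 u ![a, b, c, d] =
      ((transfer u a)ᵀ * transfer u a * (transfer u b * (transfer u b)ᵀ)).trace / 8 := by
  set A := transfer u a
  set B := transfer u b
  calc ∑ c, ∑ d, ringP 4 u ![a, b, c, d]
      = ∑ c, (A * B * transfer u c * (A * B * transfer u c)ᵀ).trace / 16 := by
        simp only [ringP, ringAmp_four, div_pow, ← Finset.sum_div, sum_trace_mul_transfer_sq hu]
        norm_num [A, B]
    _ = (A * B * rightGram u 1 * (A * B)ᵀ).trace / 16 := by
        simp only [rightGram, Finset.mul_sum, Finset.sum_mul, trace_sum, Finset.sum_div,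
          Pi.one_apply, one_smul, transpose_mul, Matrix.mul_assoc]
    _ = (A * B * (A * B)ᵀ).trace / 8 := by
        rw [rightGram_one hu, ← smul_one_eq_diagonal]
        simp only [Matrix.mul_smul, Matrix.smul_mul, Matrix.mul_one, trace_smul, smul_eq_mul]
        ring
    _ = (Aᵀ * A * (B * Bᵀ)).trace / 8 := by
        rw [transpose_mul, trace_mul_comm (Aᵀ * A), ← trace_mul_cycle]
        simp only [Matrix.mul_assoc]

lemma sum_mul_mul_ringP_four (hu : u ^ 2 ≤ 1) (f g : Outc → ℝ) (k : Fin 4) :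
    ∑ a : Fin 4 → Outc, f (a k) * g (a (k + 1)) * ringP 4 u a =
      (leftGram u f * rightGram u g).trace / 8 := by
  have hshift (a : Fin 4 → Outc) : ringP 4 u (a ∘ Equiv.addRight k) = ringP 4 u a :=
    ringP_comp_perm u a fun i => by simp [finNext_four, add_right_comm]
  calc ∑ a : Fin 4 → Outc, f (a k) * g (a (k + 1)) * ringP 4 u a
      = ∑ a : Fin 4 → Outc, f (a 0) * g (a 1) * ringP 4 u a := by
        rw [← ((Equiv.addRight k).arrowCongr (Equiv.refl Outc)).sum_comp]
        refine Fintype.sum_congr _ _ fun a => ?_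
        rw [← hshift]
        simp [Equiv.arrowCongr, Function.comp_def]
    _ = ∑ a, ∑ b, f a * g b * ∑ c, ∑ d, ringP 4 u ![a, b, c, d] := by
        simp only [sum_univ_pi_fin_four, Finset.mul_sum]
        rfl
    _ = (leftGram u f * rightGram u g).trace / 8 := by
        simp only [sum_ringP_four hu, leftGram, rightGram, Finset.sum_mul_sum, trace_sum,
          Finset.sum_div, smul_mul_smul_comm, trace_smul, smul_eq_mul, mul_div_assoc]

lemma ringAmp_four_one (u : ℝ) (i : Fin 4 → Fin 2) :
    ringAmp 4 u (fun k => .one (i k)) = (∏ k, uco u (i k) + ∏ k, vco u (i k)) / 4 := by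
  rw [show (fun k => Outc.one (i k)) = ![.one (i 0), .one (i 1), .one (i 2), .one (i 3)] by
    ext k; fin_cases k <;> rfl, ringAmp_four]
  simp [transfer_one, Fin.prod_univ_four, trace_fin_two]

lemma ringP_four_one_one (hu : u ^ 2 ≤ 1) :
    ringP 4 u (fun _ => .one 1) = ((1 - u ^ 2) ^ 2 + (u ^ 2) ^ 2) ^ 2 / 16 := by
  have hsq : √(1 - u ^ 2) ^ 4 = (1 - u ^ 2) ^ 2 := by
    rw [show √(1 - u ^ 2) ^ 4 = (√(1 - u ^ 2) ^ 2) ^ 2 by ring, Real.sq_sqrt (sub_nonneg.2 hu)]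
  rw [ringP, ringAmp_four_one u fun _ => 1]
  simp only [Finset.prod_const, Finset.card_univ, Fintype.card_fin, uco, vco, cons_val_one,
    cons_val_fin_one, hsq]
  ring

lemma ringP_four_update_one_zero (hu : u ^ 2 ≤ 1) (k : Fin 4) :
    ringP 4 u (Function.update (fun _ => .one 1) k (.one 0)) =
      u ^ 2 * (1 - u ^ 2) * (1 - 2 * u ^ 2) ^ 2 / 16 := by
  have hupdate : Function.update (fun _ => Outc.one 1) k (.one 0) =
      fun j => .one (Function.update (fun _ => (1 : Fin 2)) k 0 j) :=
    (Function.comp_update Outc.one (fun _ => 1) k 0).symm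
  have hprod (w : Fin 2 → ℝ) :
      ∏ j, w (Function.update (fun _ => (1 : Fin 2)) k 0 j) = w 0 * w 1 ^ 3 := by
    simp_rw [← Function.comp_apply (f := w), Function.comp_update]
    simp [Finset.prod_update_of_mem, Finset.card_sdiff]
  rw [ringP, hupdate, ringAmp_four_one, hprod, hprod]
  simp only [uco, vco, Matrix.cons_val_zero, Matrix.cons_val_one]
  rw [show (u * √(1 - u ^ 2) ^ 3 + √(1 - u ^ 2) * (-u) ^ 3) / 4 =
    u * √(1 - u ^ 2) * (√(1 - u ^ 2) ^ 2 - u ^ 2) / 4 by ring, div_pow, mul_pow, mul_pow,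
    Real.sq_sqrt (sub_nonneg.2 hu)]
  ring

lemma sum_excess_mul_ringP_four (hu : u ^ 2 ≤ 1) (k : Fin 4) :
    ∑ a : Fin 4 → Outc, ((a k).excess : ℝ) * ringP 4 u a = 0 := by
  have h := sum_mul_mul_ringP_four hu (fun a => (a.excess : ℝ)) 1 k
  simpa [leftGram_eq, rightGram_one hu, Outc.excess] using h

lemma sum_excess_mul_excess_mul_ringP_four (hu : u ^ 2 ≤ 1) (k : Fin 4) :
    ∑ a : Fin 4 → Outc, ((a k).excess : ℝ) * (a (k + 1)).excess * ringP 4 u a = -1 / 4 := by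
  rw [sum_mul_mul_ringP_four hu (fun a => (a.excess : ℝ)) (fun a => (a.excess : ℝ))]
  norm_num [leftGram_eq, rightGram_eq, Outc.excess]

lemma sum_single_mul_ringP_four (hu : u ^ 2 ≤ 1) (k : Fin 4) :
    ∑ a : Fin 4 → Outc, Pi.single (M := fun _ => ℝ) (.one 1) 1 (a k) * ringP 4 u a = 1 / 4 := by
  have h := sum_mul_mul_ringP_four hu (Pi.single (.one 1) 1) 1 k
  rw [leftGram_single, rightGram_one hu, diagonal_mul_diagonal, trace_diagonal,
    Fin.sum_univ_two] at h
  simp only [Pi.one_apply, mul_one, cons_val_zero, cons_val_one, cons_val_fin_one] at h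
  linear_combination h + 1 / 4 * uco_sq_add_vco_sq hu 1

lemma sum_single_mul_excess_mul_ringP_four (hu : u ^ 2 ≤ 1) (k : Fin 4) :
    ∑ a : Fin 4 → Outc, Pi.single (M := fun _ => ℝ) (.one 1) 1 (a k) * (a (k + 1)).excess *
      ringP 4 u a = (2 * u ^ 2 - 1) / 8 := by
  rw [sum_mul_mul_ringP_four hu (Pi.single (.one 1) 1) fun a => (a.excess : ℝ)]
  rw [leftGram_single, rightGram_eq, diagonal_mul_diagonal, trace_diagonal, Fin.sum_univ_two]
  simp only [Outc.excess, cons_val_zero, cons_val_one, cons_val_fin_one, Int.cast_neg,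
    Int.cast_one, Int.cast_zero]
  have hvco : vco u 1 ^ 2 = u ^ 2 := neg_sq u
  linear_combination -1 / 8 * uco_sq_add_vco_sq hu 1 + 1 / 4 * hvco

end TransferMatrix

lemma eq_const_or_exists_eq_update {ι : Type*} [Fintype ι] [DecidableEq ι] {a : ι → Outc}
    (hbalanced : ∑ k, (a k).excess = 0) (hcard : #{k | a k ≠ .one 1} ≤ 1) :
    a = (fun _ => .one 1) ∨ ∃ k, a = Function.update (fun _ => .one 1) k (.one 0) := by
  by_cases hall : ∀ k, a k = .one 1
  · exact Or.inl (funext hall)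
  · obtain ⟨k, hk⟩ := not_forall.1 hall
    have hrest (j) (hj : j ≠ k) : a j = .one 1 := by
      by_contra h
      exact hj (Finset.card_le_one.1 hcard j (by simpa) k (by simpa))
    have hexcess : (a k).excess = 0 := by
      rwa [Fintype.sum_eq_single k fun j hj => by rw [hrest j hj]; rfl] at hbalanced
    have hzero : a k = .one 0 := by
      revert hk hexcess
      generalize a k = b
      revert b
      decide
    exact Or.inr ⟨k, Function.eq_update_iff.2 ⟨hzero, hrest⟩⟩

lemma card_one_one_le_of_sum_excess_eq_zero {a : Fin 4 → Outc} (ha : ∑ k, (a k).excess = 0) :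
    #{k | a k = .one 1} ≤ 2 + 2 * (if a = fun _ => .one 1 then 1 else 0) +
      #{k | a = Function.update (fun _ => .one 1) k (.one 0)} := by
  have hadd : #{k | a k = .one 1} + #{k | a k ≠ .one 1} = 4 :=
    Finset.card_filter_add_card_filter_not fun k => a k = .one 1
  obtain hcard | hcard := le_or_gt #{k | a k ≠ .one 1} 1
  · obtain rfl | ⟨k, hk⟩ := eq_const_or_exists_eq_update ha hcard
    · simp
    · have hne : 0 < #{j | a j ≠ .one 1} := Finset.card_pos.2 ⟨k, by simp [hk]⟩
      have hmem : 0 < #{j | a = Function.update (fun _ => .one 1) j (.one 0)} :=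
        Finset.card_pos.2 ⟨k, by simp [hk]⟩
      omega
  · omega

lemma sum_card_one_one_sub_two_mul_le {w : (Fin 4 → Outc) → ℝ} (hw : ∀ a, 0 ≤ w a)
    (hbalanced : ∀ a, ∑ k, (a k).excess ≠ 0 → w a = 0) :
    ∑ a, ((#{k | a k = .one 1} : ℝ) - 2) * w a ≤
      2 * w (fun _ => .one 1) + ∑ k, w (Function.update (fun _ => .one 1) k (.one 0)) := by
  calc ∑ a, ((#{k | a k = .one 1} : ℝ) - 2) * w a
      ≤ ∑ a, (2 * (if a = fun _ => .one 1 then 1 else 0) +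
          #{k | a = Function.update (fun _ => .one 1) k (.one 0)}) * w a := by
        refine Finset.sum_le_sum fun a _ => ?_
        by_cases ha : ∑ k, (a k).excess = 0
        · refine mul_le_mul_of_nonneg_right ?_ (hw a)
          have hcard : (#{k | a k = .one 1} : ℝ) ≤ _ :=
            Nat.cast_le.2 (card_one_one_le_of_sum_excess_eq_zero ha)
          push_cast at hcard
          linarith
        · simp [hbalanced a ha]
    _ = _ := by
        simp only [Finset.card_filter, Nat.cast_sum, Nat.cast_ite, Nat.cast_one, Nat.cast_zero,
          add_mul, Finset.sum_add_distrib, Finset.sum_mul, mul_assoc, ← Finset.mul_sum, ite_mul,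
          one_mul, zero_mul, Finset.sum_ite_eq', Finset.mem_univ, if_true]
        rw [Finset.sum_comm]
        simp

/-- Bounded measurable real functions: a class closed under arithmetic and partial integration whose
members are integrable for every finite measure. -/
@[fun_prop]
structure BoundedMeasurable {α : Type*} [MeasurableSpace α] (f : α → ℝ) : Prop where
  measurable : Measurable f
  exists_abs_le : ∃ C, ∀ x, |f x| ≤ C

namespace BoundedMeasurable

variable {α β : Type*} [MeasurableSpace α] [MeasurableSpace β] {f g : α → ℝ}

@[fun_prop]
lemma const (c : ℝ) : BoundedMeasurable fun _ : α => c :=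
  ⟨measurable_const, |c|, fun _ => le_rfl⟩

@[fun_prop]
lemma sub (hf : BoundedMeasurable f) (hg : BoundedMeasurable g) :
    BoundedMeasurable fun x => f x - g x := by
  obtain ⟨C, hC⟩ := hf.exists_abs_le
  obtain ⟨C', hC'⟩ := hg.exists_abs_le
  exact ⟨hf.measurable.sub hg.measurable, C + C', fun x =>
    (abs_sub _ _).trans (add_le_add (hC x) (hC' x))⟩

@[fun_prop]
lemma add (hf : BoundedMeasurable f) (hg : BoundedMeasurable g) :
    BoundedMeasurable fun x => f x + g x := by
  obtain ⟨C, hC⟩ := hf.exists_abs_le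
  obtain ⟨C', hC'⟩ := hg.exists_abs_le
  exact ⟨hf.measurable.add hg.measurable, C + C', fun x =>
    (abs_add_le _ _).trans (add_le_add (hC x) (hC' x))⟩

@[fun_prop]
lemma mul (hf : BoundedMeasurable f) (hg : BoundedMeasurable g) :
    BoundedMeasurable fun x => f x * g x := by
  obtain ⟨C, hC⟩ := hf.exists_abs_le
  obtain ⟨C', hC'⟩ := hg.exists_abs_le
  refine ⟨hf.measurable.mul hg.measurable, C * C', fun x => ?_⟩
  rw [abs_mul]
  exact mul_le_mul (hC x) (hC' x) (abs_nonneg _) ((abs_nonneg _).trans (hC x))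

@[fun_prop]
lemma pow (hf : BoundedMeasurable f) (n : ℕ) : BoundedMeasurable fun x => f x ^ n := by
  induction n with
  | zero => simpa using const 1
  | succ n ih => simpa only [pow_succ] using ih.mul hf

@[fun_prop]
lemma finset_sum {ι : Type*} (s : Finset ι) {f : ι → α → ℝ} (hf : ∀ i, BoundedMeasurable (f i)) :
    BoundedMeasurable fun x => ∑ i ∈ s, f i x := by
  classical
  induction s using Finset.induction_on with
  | empty => simpa using const 0
  | insert i s hi ih => simpa only [Finset.sum_insert hi] using (hf i).add ih

@[fun_prop]
lemma finset_prod {ι : Type*} (s : Finset ι) {f : ι → α → ℝ} (hf : ∀ i, BoundedMeasurable (f i)) :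
    BoundedMeasurable fun x => ∏ i ∈ s, f i x := by
  classical
  induction s using Finset.induction_on with
  | empty => simpa using const 1
  | insert i s hi ih => simpa only [Finset.prod_insert hi] using (hf i).mul ih

lemma comp {f : β → ℝ} (hf : BoundedMeasurable f) {g : α → β} (hg : Measurable g) :
    BoundedMeasurable fun x => f (g x) :=
  ⟨hf.measurable.comp hg, hf.exists_abs_le.imp fun _ hC x => hC (g x)⟩

lemma integrable (hf : BoundedMeasurable f) {μ : Measure α} [IsFiniteMeasure μ] :
    Integrable f μ := by
  obtain ⟨C, hC⟩ := hf.exists_abs_le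
  exact .of_bound hf.measurable.aestronglyMeasurable C (.of_forall hC)

lemma integral_comp {f : β → ℝ} (hf : BoundedMeasurable f) {g : α → β} {μ : Measure α}
    {ν : Measure β} (hg : MeasurePreserving g μ ν) : ∫ x, f (g x) ∂μ = ∫ y, f y ∂ν := by
  rw [← hg.map_eq, integral_map hg.aemeasurable hf.measurable.aestronglyMeasurable]

lemma ae_eq_of_comp {f g : β → ℝ} (hf : BoundedMeasurable f) (hg : BoundedMeasurable g)
    {φ : α → β} {μ : Measure α} {ν : Measure β} (hφ : MeasurePreserving φ μ ν)
    (h : ∀ᵐ x ∂μ, f (φ x) = g (φ x)) : ∀ᵐ y ∂ν, f y = g y := by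
  rwa [← hφ.map_eq, ae_map_iff hφ.aemeasurable (measurableSet_eq_fun hf.measurable hg.measurable)]

lemma integral_right {f : α → β → ℝ} (hf : BoundedMeasurable fun p : α × β => f p.1 p.2)
    (ν : Measure β) [IsProbabilityMeasure ν] : BoundedMeasurable fun x => ∫ y, f x y ∂ν := by
  obtain ⟨C, hC⟩ := hf.exists_abs_le
  refine ⟨(StronglyMeasurable.integral_prod_right'
    hf.measurable.stronglyMeasurable).measurable, C, fun x => ?_⟩
  have hfx : ∀ y, ‖f x y‖ ≤ C := fun y => hC (x, y)
  simpa using norm_integral_le_of_norm_le_const (μ := ν) (.of_forall hfx)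

end BoundedMeasurable

section FiniteProduct

variable {ι A : Type*} [Fintype ι] [Fintype A] {p : ι → A → ℝ}

lemma sum_prod_mul_prod [DecidableEq ι] (hp : ∀ k, ∑ a, p k a = 1) (s : Finset ι) (f : ι → A → ℝ) :
    ∑ a : ι → A, (∏ k ∈ s, f k (a k)) * ∏ k, p k (a k) = ∏ k ∈ s, ∑ a, f k a * p k a := by
  calc ∑ a : ι → A, (∏ k ∈ s, f k (a k)) * ∏ k, p k (a k)
      = ∑ a : ι → A, ∏ k, (if k ∈ s then f k (a k) else 1) * p k (a k) := by
        simp only [Finset.prod_mul_distrib, Finset.prod_ite_mem, Finset.univ_inter]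
    _ = ∏ k, ∑ a, (if k ∈ s then f k a else 1) * p k a := by
        rw [Finset.prod_univ_sum, Fintype.piFinset_univ]
    _ = ∏ k, if k ∈ s then ∑ a, f k a * p k a else 1 := by
        refine Finset.prod_congr rfl fun k _ => ?_
        split_ifs <;> simp [hp]
    _ = ∏ k ∈ s, ∑ a, f k a * p k a := by simp

-- Changing one coordinate of a joint output of nonzero probability leaves the total unchanged.
lemma sum_mean_eq_and_eq_mean {e : A → ℝ} {c : ℝ} (hp : ∀ k, ∑ a, p k a = 1)
    (hprod : ∀ a : ι → A, ∑ k, e (a k) ≠ c → ∏ k, p k (a k) = 0) :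
    ∑ k, ∑ a, e a * p k a = c ∧ ∀ k a, p k a ≠ 0 → e a = ∑ b, e b * p k b := by
  classical
  have hexists (k) : ∃ a, p k a ≠ 0 := by
    by_contra! h
    simpa [h] using hp k
  choose a₀ ha₀ using hexists
  have htotal (a : ι → A) (ha : ∀ k, p k (a k) ≠ 0) : ∑ k, e (a k) = c :=
    not_imp_comm.1 (hprod a) (Finset.prod_ne_zero_iff.2 fun k _ => ha k)
  have hconst (k) (a) (ha : p k a ≠ 0) : e a = e (a₀ k) := by
    have hne : ∀ j, p j (Function.update a₀ k a j) ≠ 0 := by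
      intro j
      obtain rfl | hj := eq_or_ne j k <;> simp [*]
    have hupdate := htotal _ hne
    simp only [Function.apply_update (fun _ => e), Finset.sum_update_of_mem (Finset.mem_univ k)]
      at hupdate
    have hbase := htotal a₀ ha₀
    rw [Finset.sum_eq_add_sum_sdiff_singleton_of_mem (Finset.mem_univ k)] at hbase
    linarith
  have hmean (k) : ∑ a, e a * p k a = e (a₀ k) := by
    rw [← mul_one (e (a₀ k)), ← hp k, Finset.mul_sum]
    refine Fintype.sum_congr _ _ fun a => ?_
    obtain ha | ha := eq_or_ne (p k a) 0
    · simp [ha]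
    · rw [hconst k a ha]
  exact ⟨by simpa only [hmean] using htotal a₀ ha₀, fun k a ha => by rw [hmean, hconst k a ha]⟩

end FiniteProduct

lemma measurePreserving_eval_pairs {ι Λ : Type*} [Fintype ι] [MeasurableSpace Λ] (μ : Measure Λ)
    [IsProbabilityMeasure μ] {i j k l : ι} (hij : i ≠ j) (hkl : k ≠ l) (hik : i ≠ k) (hil : i ≠ l)
    (hjk : j ≠ k) (hjl : j ≠ l) :
    MeasurePreserving (fun ω : ι → Λ => ((ω i, ω j), (ω k, ω l))) (.pi fun _ => μ)
      ((μ.prod μ).prod (μ.prod μ)) := by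
  have hindep : ProbabilityTheory.iIndepFun (fun i (ω : ι → Λ) => ω i) (.pi fun _ => μ) :=
    ProbabilityTheory.iIndepFun_pi (X := fun _ => id) fun _ => aemeasurable_id
  have hmap (i : ι) : Measure.map (fun ω : ι → Λ => ω i) (.pi fun _ => μ) = μ :=
    (measurePreserving_eval (fun _ => μ) i).map_eq
  have hpair {i j : ι} (hij : i ≠ j) :
      Measure.map (fun ω : ι → Λ => (ω i, ω j)) (.pi fun _ => μ) = μ.prod μ := by
    rw [(hindep.indepFun hij).map_prod_eq_prod_map_map
      (measurable_pi_apply i).aemeasurable (measurable_pi_apply j).aemeasurable, hmap, hmap]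
  refine ⟨by fun_prop, ?_⟩
  rw [(hindep.indepFun_prodMk_prodMk (fun _ => by fun_prop) i j k l hik hil hjk hjl
    ).map_prod_eq_prod_map_map (by fun_prop) (by fun_prop), hpair hij, hpair hkl]

/-- A response kernel: the distribution of an output in `A` as a measurable function of two hidden
variables. -/
structure Response (A X Y : Type*) [Fintype A] [MeasurableSpace X] [MeasurableSpace Y] where
  prob : A → X → Y → ℝ
  measurable_prob (a : A) : Measurable fun p : X × Y => prob a p.1 p.2
  prob_nonneg (a : A) (x : X) (y : Y) : 0 ≤ prob a x y
  sum_prob (x : X) (y : Y) : ∑ a, prob a x y = 1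

namespace Response

variable {A X Y Ω : Type*} [Fintype A] [MeasurableSpace X] [MeasurableSpace Y] [MeasurableSpace Ω]
  (r : Response A X Y)

/-- The response kernel reading its hidden variables off a larger one. -/
def comap {g : Ω → X} {h : Ω → Y} (hg : Measurable g) (hh : Measurable h) : Response A Ω Ω where
  prob a ω ω' := r.prob a (g ω) (h ω')
  measurable_prob a := (r.measurable_prob a).comp (by fun_prop :
    Measurable fun p : Ω × Ω => (g p.1, h p.2))
  prob_nonneg a ω ω' := r.prob_nonneg a (g ω) (h ω')
  sum_prob ω ω' := r.sum_prob (g ω) (h ω')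

lemma prob_le_one (a : A) (x : X) (y : Y) : r.prob a x y ≤ 1 :=
  (Finset.single_le_sum (fun b _ => r.prob_nonneg b x y) (Finset.mem_univ a)).trans_eq
    (r.sum_prob x y)

@[fun_prop]
lemma boundedMeasurable_prob (a : A) {g : Ω → X} {h : Ω → Y} (hg : Measurable g)
    (hh : Measurable h) : BoundedMeasurable fun ω => r.prob a (g ω) (h ω) :=
  ⟨(r.measurable_prob a).comp (hg.prodMk hh), 1, fun _ => abs_le.2
    ⟨neg_one_lt_zero.le.trans (r.prob_nonneg a _ _), r.prob_le_one a _ _⟩⟩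

/-- The mean of the statistic `f` of the output, given the two hidden variables. -/
def mean (f : A → ℝ) (x : X) (y : Y) : ℝ :=
  ∑ a, f a * r.prob a x y

@[fun_prop]
lemma boundedMeasurable_mean (f : A → ℝ) {g : Ω → X} {h : Ω → Y} (hg : Measurable g)
    (hh : Measurable h) : BoundedMeasurable fun ω => r.mean f (g ω) (h ω) := by
  unfold mean
  fun_prop

lemma mean_one : r.mean 1 = 1 := by
  ext x y
  simp [mean, r.sum_prob]

lemma mean_single [DecidableEq A] (a : A) : r.mean (Pi.single a 1) = r.prob a := by
  ext x y
  simp [mean, Pi.single_apply]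

end Response

/-- A local model of an `N`-party ring in which all sources have the same distribution: party `k`
reads the hidden variables of the sources `k` and `finNext k`. -/
structure RingModel (A : Type*) [Fintype A] (N : ℕ) (Λ : Type*) [MeasurableSpace Λ] where
  source : Measure Λ
  [isProbabilityMeasure_source : IsProbabilityMeasure source]
  response : Fin N → Response A Λ Λ

namespace RingModel

attribute [instance] isProbabilityMeasure_source

variable {A : Type*} [Fintype A] {Λ : Type*} [MeasurableSpace Λ] {N : ℕ} (M : RingModel A N Λ)

/-- The joint distribution of the hidden variables. -/
noncomputable def hidden : Measure (Fin N → Λ) := .pi fun _ => M.source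

instance : IsProbabilityMeasure M.hidden := by
  unfold hidden
  infer_instance

/-- The probability of the joint output `a`. -/
noncomputable def dist (a : Fin N → A) : ℝ :=
  ∫ ω, ∏ k, (M.response k).prob (a k) (ω k) (ω (finNext k)) ∂M.hidden

lemma integrable_prod (a : Fin N → A) :
    Integrable (fun ω => ∏ k, (M.response k).prob (a k) (ω k) (ω (finNext k))) M.hidden :=
  BoundedMeasurable.integrable (by fun_prop)

lemma integral_sum_mul_prod (F : (Fin N → A) → ℝ) :
    ∫ ω, ∑ a, F a * ∏ k, (M.response k).prob (a k) (ω k) (ω (finNext k)) ∂M.hidden =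
      ∑ a, F a * M.dist a := by
  rw [integral_finsetSum _ fun a _ => (M.integrable_prod a).const_mul (F a)]
  simp only [integral_const_mul, dist]

lemma ae_prod_eq_zero {a : Fin N → A} (ha : M.dist a = 0) :
    ∀ᵐ ω ∂M.hidden, ∏ k, (M.response k).prob (a k) (ω k) (ω (finNext k)) = 0 :=
  (integral_eq_zero_iff_of_nonneg
    (fun _ => Finset.prod_nonneg fun k _ => (M.response k).prob_nonneg _ _ _)
    (M.integrable_prod a)).1 ha

lemma ae_prod_eq_zero_of_sum_ne {e : A → ℝ} {c : ℝ}
    (hdist : ∀ a, ∑ k, e (a k) ≠ c → M.dist a = 0) :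
    ∀ᵐ ω ∂M.hidden, ∀ a : Fin N → A, ∑ k, e (a k) ≠ c →
      ∏ k, (M.response k).prob (a k) (ω k) (ω (finNext k)) = 0 := by
  refine ae_all_iff.2 fun a => ?_
  by_cases ha : ∑ k, e (a k) = c
  · exact .of_forall fun _ h => absurd ha h
  · exact (M.ae_prod_eq_zero (hdist a ha)).mono fun _ h _ => h

lemma ae_sum_mean_eq_and_eq_mean {e : A → ℝ} {c : ℝ}
    (hdist : ∀ a, ∑ k, e (a k) ≠ c → M.dist a = 0) :
    ∀ᵐ ω ∂M.hidden, ∑ k, (M.response k).mean e (ω k) (ω (finNext k)) = c ∧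
      ∀ k a, (M.response k).prob a (ω k) (ω (finNext k)) ≠ 0 →
        e a = (M.response k).mean e (ω k) (ω (finNext k)) := by
  filter_upwards [M.ae_prod_eq_zero_of_sum_ne hdist] with ω hω
  exact sum_mean_eq_and_eq_mean (fun k => (M.response k).sum_prob _ _) hω

lemma sum_prod_mul_prob (ω : Fin N → Λ) (s : Finset (Fin N)) (f : Fin N → A → ℝ) :
    ∑ a : Fin N → A, (∏ k ∈ s, f k (a k)) *
        ∏ k, (M.response k).prob (a k) (ω k) (ω (finNext k)) =
      ∏ k ∈ s, (M.response k).mean (f k) (ω k) (ω (finNext k)) :=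
  sum_prod_mul_prod (fun k => (M.response k).sum_prob _ _) s f

lemma sum_prod_prob (ω : Fin N → Λ) :
    ∑ a : Fin N → A, ∏ k, (M.response k).prob (a k) (ω k) (ω (finNext k)) = 1 := by
  simpa using M.sum_prod_mul_prob ω ∅ fun _ => 0

lemma sum_card_filter_eq_mul_prob [DecidableEq A] (b : A) (ω : Fin N → Λ) :
    ∑ a : Fin N → A, (#{k | a k = b} : ℝ) *
        ∏ k, (M.response k).prob (a k) (ω k) (ω (finNext k)) =
      ∑ k, (M.response k).prob b (ω k) (ω (finNext k)) := by
  have hsingle (k) := M.sum_prod_mul_prob ω {k} fun _ => Pi.single b 1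
  simp only [Finset.prod_singleton, Response.mean_single, Pi.single_apply] at hsingle
  simp only [← hsingle, Finset.card_filter, Nat.cast_sum, Nat.cast_ite, Nat.cast_one,
    Nat.cast_zero, Finset.sum_mul]
  exact Finset.sum_comm

end RingModel

@[to_additive]
lemma prod_univ_fin_four_rotate {R : Type*} [CommMonoid R] (f : Fin 4 → R) (k : Fin 4) :
    ∏ j, f j = f k * f (k + 1) * (f (k + 2) * f (k + 3)) := by
  rw [← Equiv.prod_comp (Equiv.addLeft k), Fin.prod_univ_four, mul_assoc]
  simp

lemma ae_sq_eq_quarter {α β : Type*} [MeasurableSpace α] [MeasurableSpace β] {μ : Measure α}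
    {ν : Measure β} [IsProbabilityMeasure μ] [IsProbabilityMeasure ν] {f : α → ℝ} {g : β → ℝ}
    (hf : BoundedMeasurable f) (hg : BoundedMeasurable g) (hf₁ : ∫ x, f x ∂μ = 0)
    (hf₂ : ∫ x, f x ^ 2 ∂μ = 1 / 4) (hg₁ : ∫ y, g y ∂ν = 0) (hg₂ : ∫ y, g y ^ 2 ∂ν = 1 / 4)
    (hcube : ∀ᵐ p ∂μ.prod ν, (f p.1 - g p.2) ^ 3 = f p.1 - g p.2) :
    ∀ᵐ x ∂μ, f x ^ 2 = 1 / 4 := by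
  have hcubic : ∀ᵐ x ∂μ, f x ^ 3 - f x / 4 = ∫ y, g y ^ 3 ∂ν := by
    filter_upwards [Measure.ae_ae_of_ae_prod hcube] with x hx
    have hint : ∫ y, (g y ^ 3 - 3 * f x * g y ^ 2 + (3 * f x ^ 2 - 1) * g y) ∂ν =
        ∫ _, (f x ^ 3 - f x) ∂ν := by
      refine integral_congr_ae (hx.mono fun y hy => ?_)
      dsimp only
      linear_combination -hy
    rw [integral_add, integral_sub, integral_const_mul, integral_const_mul, hg₁, hg₂,
      integral_const, probReal_univ, one_smul] at hint
    · linarith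
    all_goals exact BoundedMeasurable.integrable (by fun_prop)
  set c := ∫ y, g y ^ 3 ∂ν
  have hsq : (fun x => (f x ^ 2 - 1 / 4) ^ 2) =ᵐ[μ]
      fun x => c * f x - 1 / 4 * f x ^ 2 + 1 / 16 := by
    filter_upwards [hcubic] with x hx
    linear_combination f x * hx
  have hzero : ∫ x, (f x ^ 2 - 1 / 4) ^ 2 ∂μ = 0 := by
    rw [integral_congr_ae hsq, integral_add, integral_sub, integral_const_mul,
      integral_const_mul, hf₁, hf₂]
    · norm_num
    all_goals exact BoundedMeasurable.integrable (by fun_prop)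
  have hbdd : BoundedMeasurable fun x => (f x ^ 2 - 1 / 4) ^ 2 := by fun_prop
  filter_upwards [(integral_eq_zero_iff_of_nonneg (fun _ => sq_nonneg _) hbdd.integrable).1 hzero]
    with x hx
  exact sub_eq_zero.1 (pow_eq_zero_iff two_ne_zero |>.1 hx)

namespace RingModel

section Quadrangle

variable {A : Type*} [Fintype A] {Λ : Type*} [MeasurableSpace Λ] (M : RingModel A 4 Λ)

lemma measurePreserving_quadrangle (k : Fin 4) :
    MeasurePreserving (fun ω => ((ω k, ω (k + 1)), (ω (k + 2), ω (k + 3)))) M.hidden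
      ((M.source.prod M.source).prod (M.source.prod M.source)) := by
  refine measurePreserving_eval_pairs M.source ?_ ?_ ?_ ?_ ?_ ?_ <;> revert k <;> decide

lemma measurePreserving_edge (k : Fin 4) :
    MeasurePreserving (fun ω => (ω k, ω (k + 1))) M.hidden (M.source.prod M.source) :=
  measurePreserving_fst.comp (M.measurePreserving_quadrangle k)

lemma sum_mul_mul_dist (f g : A → ℝ) (k : Fin 4) :
    ∑ a, f (a k) * g (a (k + 1)) * M.dist a =
      ∫ p, (M.response k).mean f p.1 p.2 * ∫ y, (M.response (k + 1)).mean g p.2 y ∂M.source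
        ∂M.source.prod M.source := by
  have hk : k ≠ k + 1 := by revert k; decide
  have hk₂ : k + 1 + 1 = k + 2 := by rw [add_assoc]; rfl
  rw [← M.integral_sum_mul_prod]
  have hpair (ω) := M.sum_prod_mul_prob ω {k, k + 1} fun j => if j = k then f else g
  simp only [Finset.prod_pair hk, if_true, if_neg hk.symm, finNext_four, hk₂] at hpair
  simp only [finNext_four, hpair]
  have hbdd : BoundedMeasurable fun q : (Λ × Λ) × (Λ × Λ) =>
    (M.response k).mean f q.1.1 q.1.2 * (M.response (k + 1)).mean g q.1.2 q.2.1 := by fun_prop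
  rw [hbdd.integral_comp (M.measurePreserving_quadrangle k), integral_prod _ hbdd.integrable]
  refine integral_congr_ae (.of_forall fun p => ?_)
  simp only [integral_const_mul]
  rw [integral_fun_fst fun y => (M.response (k + 1)).mean g p.2 y, probReal_univ, one_smul]

lemma sum_mul_dist (f : A → ℝ) (k : Fin 4) :
    ∑ a, f (a k) * M.dist a = ∫ p, (M.response k).mean f p.1 p.2 ∂M.source.prod M.source := by
  simpa [Response.mean_one] using M.sum_mul_mul_dist f 1 k

end Quadrangle

section Tokens

variable {Λ : Type*} [MeasurableSpace Λ] (M : RingModel Outc 4 Λ)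

/-- The mean excess of the output of party `k`, given its two hidden variables. -/
def current (k : Fin 4) : Λ → Λ → ℝ :=
  (M.response k).mean fun a => a.excess

/-- The contribution of source `k` to the current of party `k`; its negative is the contribution
of source `k` to the current of the preceding party. -/
noncomputable def token (k : Fin 4) (x : Λ) : ℝ :=
  ∫ y, M.current k x y ∂M.source

variable {Ω : Type*} [MeasurableSpace Ω]

@[fun_prop]
lemma boundedMeasurable_current (k : Fin 4) {g h : Ω → Λ} (hg : Measurable g) (hh : Measurable h) :
    BoundedMeasurable fun ω => M.current k (g ω) (h ω) :=
  (M.response k).boundedMeasurable_mean _ hg hh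

@[fun_prop]
lemma boundedMeasurable_token (k : Fin 4) {g : Ω → Λ} (hg : Measurable g) :
    BoundedMeasurable fun ω => M.token k (g ω) :=
  (BoundedMeasurable.integral_right (by fun_prop) M.source).comp hg

variable {M} {u : ℝ} (hM : M.dist = ringP 4 u)

include hM

lemma ae_sum_current_eq_zero_and_excess_eq_current :
    ∀ᵐ ω ∂M.hidden, ∑ k, M.current k (ω k) (ω (k + 1)) = 0 ∧
      ∀ k a, (M.response k).prob a (ω k) (ω (k + 1)) ≠ 0 →
        (a.excess : ℝ) = M.current k (ω k) (ω (k + 1)) := by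
  refine M.ae_sum_mean_eq_and_eq_mean fun a ha => ?_
  rw [hM]
  exact ringP_eq_zero_of_sum_excess_ne_zero u a (mod_cast ha)

lemma integral_current (hu : u ^ 2 ≤ 1) (k : Fin 4) :
    ∫ p, M.current k p.1 p.2 ∂M.source.prod M.source = 0 := by
  rw [current, ← sum_mul_dist, hM, sum_excess_mul_ringP_four hu]

lemma integral_token (hu : u ^ 2 ≤ 1) (k : Fin 4) : ∫ x, M.token k x ∂M.source = 0 := by
  simp only [token]
  rw [← integral_current hM hu k, integral_prod _ (BoundedMeasurable.integrable (by fun_prop))]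

-- Average the conservation law over the two hidden variables that party `k` does not read.
lemma ae_current_eq_token_sub_token (hu : u ^ 2 ≤ 1) (k : Fin 4) :
    ∀ᵐ p ∂M.source.prod M.source,
      M.current k p.1 p.2 = M.token k p.1 - M.token (k + 1) p.2 := by
  have hquad : ∀ᵐ q ∂(M.source.prod M.source).prod (M.source.prod M.source),
      M.current k q.1.1 q.1.2 + M.current (k + 1) q.1.2 q.2.1 +
        (M.current (k + 2) q.2.1 q.2.2 + M.current (k + 3) q.2.2 q.1.1) = 0 := by
    refine BoundedMeasurable.ae_eq_of_comp (by fun_prop) (by fun_prop)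
      (M.measurePreserving_quadrangle k) ?_
    filter_upwards [ae_sum_current_eq_zero_and_excess_eq_current hM] with ω hω
    obtain ⟨h₁, h₂, h₃⟩ : k + 1 + 1 = k + 2 ∧ k + 2 + 1 = k + 3 ∧ k + 3 + 1 = k := by
      revert k
      decide
    rw [← hω.1, sum_univ_fin_four_rotate _ k, h₁, h₂, h₃]
  set ingoing : Λ → ℝ := fun w => ∫ z, M.current (k + 3) z w ∂M.source
  have hsplit : ∀ᵐ p ∂M.source.prod M.source,
      M.current k p.1 p.2 = -ingoing p.1 - M.token (k + 1) p.2 := by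
    filter_upwards [Measure.ae_ae_of_ae_prod hquad] with p hp
    have hint := integral_congr_ae hp
    rw [integral_add, integral_add, integral_add, integral_const, integral_current hM hu,
      integral_fun_fst fun y => M.current (k + 1) p.2 y,
      integral_fun_snd fun z => M.current (k + 3) z p.1] at hint
    · simp only [probReal_univ, one_smul, zero_add, integral_zero] at hint
      rw [token]
      linarith
    all_goals exact BoundedMeasurable.integrable (by fun_prop)
  have hingoing : ∀ᵐ w ∂M.source, M.token k w = -ingoing w := by
    filter_upwards [Measure.ae_ae_of_ae_prod hsplit] with w hw
    rw [token, integral_congr_ae hw, integral_sub, integral_token hM hu, integral_const,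
      probReal_univ, one_smul, sub_zero]
    all_goals exact BoundedMeasurable.integrable (by fun_prop)
  filter_upwards [hsplit, Measure.quasiMeasurePreserving_fst.ae hingoing] with p hp hp'
  rw [hp, hp']

lemma integral_token_sq (hu : u ^ 2 ≤ 1) (k : Fin 4) :
    ∫ x, M.token k x ^ 2 ∂M.source = 1 / 4 := by
  obtain ⟨j, rfl⟩ : ∃ j, k = j + 1 := ⟨k - 1, by simp⟩
  have hedge : ∫ p, M.current j p.1 p.2 * M.token (j + 1) p.2 ∂M.source.prod M.source = -1 / 4 := by
    rw [← sum_excess_mul_excess_mul_ringP_four hu j, ← hM]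
    exact (M.sum_mul_mul_dist (fun a => a.excess) (fun a => a.excess) j).symm
  rw [integral_congr_ae ((ae_current_eq_token_sub_token hM hu j).mono fun p hp =>
      congrArg (· * M.token (j + 1) p.2) hp)] at hedge
  simp only [sub_mul] at hedge
  rw [integral_sub, integral_prod_mul, integral_token hM hu, zero_mul,
    integral_fun_snd fun y => M.token (j + 1) y * M.token (j + 1) y, probReal_univ, one_smul]
    at hedge
  · simp only [sq]
    linarith
  all_goals exact BoundedMeasurable.integrable (by fun_prop)

lemma ae_current_cube_eq_current (k : Fin 4) :
    ∀ᵐ p ∂M.source.prod M.source, M.current k p.1 p.2 ^ 3 = M.current k p.1 p.2 := by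
  refine BoundedMeasurable.ae_eq_of_comp (by fun_prop) (by fun_prop)
    (M.measurePreserving_edge k) ?_
  filter_upwards [ae_sum_current_eq_zero_and_excess_eq_current hM] with ω hω
  obtain ⟨a, ha⟩ : ∃ a, (M.response k).prob a (ω k) (ω (k + 1)) ≠ 0 := by
    by_contra! h
    simpa [h] using (M.response k).sum_prob (ω k) (ω (k + 1))
  rw [← hω.2 k a ha]
  cases a <;> norm_num [Outc.excess]

lemma ae_token_sq_eq_quarter (hu : u ^ 2 ≤ 1) (k : Fin 4) :
    ∀ᵐ x ∂M.source, M.token k x ^ 2 = 1 / 4 := by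
  refine ae_sq_eq_quarter (f := M.token k) (g := M.token (k + 1)) (by fun_prop) (by fun_prop)
    (integral_token hM hu _) (integral_token_sq hM hu _) (integral_token hM hu _)
    (integral_token_sq hM hu _) ?_
  filter_upwards [ae_current_cube_eq_current hM k, ae_current_eq_token_sub_token hM hu k]
    with p hp hp'
  rwa [← hp']

lemma ae_current_mul_prob_one_eq_zero (k : Fin 4) (i : Fin 2) :
    ∀ᵐ p ∂M.source.prod M.source,
      M.current k p.1 p.2 * (M.response k).prob (.one i) p.1 p.2 = 0 := by
  refine BoundedMeasurable.ae_eq_of_comp (by fun_prop) (by fun_prop)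
    (M.measurePreserving_edge k) ?_
  filter_upwards [ae_sum_current_eq_zero_and_excess_eq_current hM] with ω hω
  obtain hprob | hprob := eq_or_ne ((M.response k).prob (.one i) (ω k) (ω (k + 1))) 0
  · rw [hprob, mul_zero]
  · rw [← hω.2 k _ hprob, Outc.excess, Int.cast_zero, zero_mul]

lemma integral_half_add_token (hu : u ^ 2 ≤ 1) (k : Fin 4) :
    ∫ x, (1 / 2 + M.token k x) ∂M.source = 1 / 2 := by
  rw [integral_add (integrable_const _) (BoundedMeasurable.integrable (by fun_prop)),
    integral_token hM hu, integral_const, probReal_univ, one_smul, add_zero]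

-- The answer `1₁` forces equal tokens, and `1/2 + token` is the indicator of the token `1/2`.
lemma ae_half_add_token_mul_prob (hu : u ^ 2 ≤ 1) (k : Fin 4) :
    ∀ᵐ p ∂M.source.prod M.source,
      (1 / 2 + M.token k p.1) * (1 / 2 + M.token (k + 1) p.2) *
          (M.response k).prob (.one 1) p.1 p.2 =
        (M.response k).prob (.one 1) p.1 p.2 * (1 / 2 + M.token (k + 1) p.2) := by
  filter_upwards [ae_current_mul_prob_one_eq_zero hM k 1, ae_current_eq_token_sub_token hM hu k,
    Measure.quasiMeasurePreserving_snd.ae (ae_token_sq_eq_quarter hM hu (k + 1))] with p h₁ h₂ h₃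
  rw [h₂] at h₁
  linear_combination (1 / 2 + M.token (k + 1) p.2) * h₁ +
    (M.response k).prob (.one 1) p.1 p.2 * h₃

lemma integral_prob_mul_half_add_token (hu : u ^ 2 ≤ 1) (k : Fin 4) :
    ∫ p, (M.response k).prob (.one 1) p.1 p.2 * (1 / 2 + M.token (k + 1) p.2)
      ∂M.source.prod M.source = u ^ 2 / 4 := by
  have hprob := M.sum_mul_dist (Pi.single (.one 1) 1) k
  have hcorr := M.sum_mul_mul_dist (Pi.single (.one 1) 1) (fun a => a.excess) k
  rw [hM, sum_single_mul_ringP_four hu, Response.mean_single] at hprob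
  rw [hM, sum_single_mul_excess_mul_ringP_four hu, Response.mean_single] at hcorr
  simp only [mul_add]
  rw [integral_add, integral_mul_const, ← hprob]
  · exact (congrArg _ hcorr.symm).trans (by ring)
  all_goals exact BoundedMeasurable.integrable (by fun_prop)

end Tokens

section Circulation

variable {Λ : Type*} [MeasurableSpace Λ] (M : RingModel Outc 4 Λ)

/-- The product over all sources of `1/2 + token`: as tokens are almost surely `±1/2`, it is the
indicator of the event that all tokens are `1/2`. -/
noncomputable def circulation (ω : Fin 4 → Λ) : ℝ :=
  ∏ k, (1 / 2 + M.token k (ω k))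

lemma boundedMeasurable_circulation : BoundedMeasurable M.circulation := by
  unfold circulation
  fun_prop

variable {M} {u : ℝ} (hM : M.dist = ringP 4 u)

include hM

lemma ae_circulation_mem_Icc (hu : u ^ 2 ≤ 1) :
    ∀ᵐ ω ∂M.hidden, M.circulation ω ∈ Set.Icc 0 1 := by
  have hsq : ∀ᵐ ω ∂M.hidden, ∀ k, M.token k (ω k) ^ 2 = 1 / 4 :=
    ae_all_iff.2 fun k => (measurePreserving_eval (fun _ => M.source) k).quasiMeasurePreserving.ae
      (ae_token_sq_eq_quarter hM hu k)
  filter_upwards [hsq] with ω hω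
  have habs (k) : |M.token k (ω k)| ≤ 1 / 2 :=
    abs_le_of_sq_le_sq (by rw [hω]; norm_num) (by norm_num)
  exact ⟨Finset.prod_nonneg fun k _ => by linarith [(abs_le.1 (habs k)).1],
    Finset.prod_le_one (fun k _ => by linarith [(abs_le.1 (habs k)).1])
      fun k _ => by linarith [(abs_le.1 (habs k)).2]⟩

lemma integral_circulation (hu : u ^ 2 ≤ 1) : ∫ ω, M.circulation ω ∂M.hidden = 1 / 16 := by
  simp only [circulation, hidden]
  rw [integral_fintype_prod_eq_prod fun k x => 1 / 2 + M.token k x]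
  simp only [integral_half_add_token hM hu, Finset.prod_const, Finset.card_univ, Fintype.card_fin]
  norm_num

lemma integral_circulation_mul_prob (hu : u ^ 2 ≤ 1) (k : Fin 4) :
    ∫ ω, M.circulation ω * (M.response k).prob (.one 1) (ω k) (ω (k + 1)) ∂M.hidden =
      u ^ 2 / 16 := by
  let f (p : Λ × Λ) : ℝ := (1 / 2 + M.token k p.1) * (1 / 2 + M.token (k + 1) p.2) *
    (M.response k).prob (.one 1) p.1 p.2
  let g (p : Λ × Λ) : ℝ := (1 / 2 + M.token (k + 2) p.1) * (1 / 2 + M.token (k + 3) p.2)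
  have hbdd : BoundedMeasurable fun q : (Λ × Λ) × (Λ × Λ) => f q.1 * g q.2 := by
    dsimp only [f, g]
    fun_prop
  have hf : ∫ p, f p ∂M.source.prod M.source = u ^ 2 / 4 := by
    rw [integral_congr_ae (ae_half_add_token_mul_prob hM hu k),
      integral_prob_mul_half_add_token hM hu]
  have hg : ∫ p, g p ∂M.source.prod M.source = 1 / 2 * (1 / 2) := by
    dsimp only [g]
    rw [integral_prod_mul (fun x => 1 / 2 + M.token (k + 2) x) fun y => 1 / 2 + M.token (k + 3) y,
      integral_half_add_token hM hu, integral_half_add_token hM hu]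
  calc ∫ ω, M.circulation ω * (M.response k).prob (.one 1) (ω k) (ω (k + 1)) ∂M.hidden
      = ∫ ω, f (ω k, ω (k + 1)) * g (ω (k + 2), ω (k + 3)) ∂M.hidden := by
        refine integral_congr_ae (.of_forall fun ω => ?_)
        dsimp only [circulation, f, g]
        rw [prod_univ_fin_four_rotate _ k]
        ring
    _ = ∫ q, f q.1 * g q.2 ∂(M.source.prod M.source).prod (M.source.prod M.source) :=
        hbdd.integral_comp (M.measurePreserving_quadrangle k)
    _ = u ^ 2 / 4 * (1 / 2 * (1 / 2)) := by rw [integral_prod_mul, hf, hg]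
    _ = u ^ 2 / 16 := by ring

end Circulation

section Inequality

variable {Λ : Type*} [MeasurableSpace Λ]

lemma integral_mul_sum_prob_sub_two_le (M : RingModel Outc 4 Λ) {c : (Fin 4 → Λ) → ℝ}
    (hc : BoundedMeasurable c) (hmem : ∀ᵐ ω ∂M.hidden, c ω ∈ Set.Icc 0 1)
    (hbalanced : ∀ a, ∑ k, (a k).excess ≠ 0 → M.dist a = 0) :
    ∫ ω, c ω * (∑ k, (M.response k).prob (.one 1) (ω k) (ω (finNext k)) - 2) ∂M.hidden ≤
      2 * M.dist (fun _ => .one 1) +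
        ∑ k, M.dist (Function.update (fun _ => .one 1) k (.one 0)) := by
  let joint (a : Fin 4 → Outc) (ω : Fin 4 → Λ) : ℝ :=
    ∏ k, (M.response k).prob (a k) (ω k) (ω (finNext k))
  have hjoint (a ω) : 0 ≤ joint a ω :=
    Finset.prod_nonneg fun k _ => (M.response k).prob_nonneg _ _ _
  have hint (a) : Integrable (fun ω => c ω * joint a ω) M.hidden :=
    BoundedMeasurable.integrable (by fun_prop)
  let w (a : Fin 4 → Outc) : ℝ := ∫ ω, c ω * joint a ω ∂M.hidden
  have hw (a) : 0 ≤ w a :=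
    integral_nonneg_of_ae (hmem.mono fun ω hω => mul_nonneg hω.1 (hjoint a ω))
  have hwle (a) : w a ≤ M.dist a :=
    integral_mono_ae (hint a) (M.integrable_prod a)
      (hmem.mono fun ω hω => mul_le_of_le_one_left (hjoint a ω) hω.2)
  calc ∫ ω, c ω * (∑ k, (M.response k).prob (.one 1) (ω k) (ω (finNext k)) - 2) ∂M.hidden
      = ∑ a, ((#{k | a k = .one 1} : ℝ) - 2) * w a := by
        simp only [w, ← integral_const_mul]
        rw [← integral_finsetSum _ fun a _ => (hint a).const_mul _]
        refine integral_congr_ae (.of_forall fun ω => ?_)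
        simp only [mul_left_comm _ (c ω), ← Finset.mul_sum, sub_mul, Finset.sum_sub_distrib, joint,
          M.sum_card_filter_eq_mul_prob, M.sum_prod_prob, mul_one]
    _ ≤ 2 * w (fun _ => .one 1) + ∑ k, w (Function.update (fun _ => .one 1) k (.one 0)) :=
        sum_card_one_one_sub_two_mul_le hw fun a ha =>
          le_antisymm ((hwle a).trans_eq (hbalanced a ha)) (hw a)
    _ ≤ _ := by
        gcongr <;> exact hwle _

theorem dist_ne_ringP_four (M : RingModel Outc 4 Λ) {u : ℝ} (hu : u ^ 2 < 1) (hu' : 1 / 2 < u ^ 4) :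
    M.dist ≠ ringP 4 u := by
  intro hM
  have hle := M.integral_mul_sum_prob_sub_two_le M.boundedMeasurable_circulation
    (ae_circulation_mem_Icc hM hu.le) fun a ha => hM ▸ ringP_eq_zero_of_sum_excess_ne_zero u a ha
  have hleft : ∫ ω, M.circulation ω *
      (∑ k, (M.response k).prob (.one 1) (ω k) (ω (finNext k)) - 2) ∂M.hidden =
        4 * (u ^ 2 / 16) - 1 / 16 * 2 := by
    have hbdd := M.boundedMeasurable_circulation
    simp only [mul_sub, Finset.mul_sum, finNext_four]
    rw [integral_sub, integral_finsetSum, integral_mul_const, integral_circulation hM hu.le]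
    · simp [integral_circulation_mul_prob hM hu.le]
    · exact fun k _ => BoundedMeasurable.integrable (by fun_prop)
    all_goals exact BoundedMeasurable.integrable (by fun_prop)
  simp only [hleft, hM, ringP_four_one_one hu.le, ringP_four_update_one_zero hu.le,
    Finset.sum_const, Finset.card_univ, Fintype.card_fin, nsmul_eq_mul] at hle
  have hgap : 0 < (1 - u ^ 2) ^ 2 * (2 * u ^ 4 - 1) :=
    mul_pos (pow_pos (by linarith) 2) (by linarith)
  push_cast at hle
  linarith

end Inequality

end RingModel

section Square

variable {A Λ₁ Λ₂ Λ₃ Λ₄ : Type*} [Fintype A] [MeasurableSpace Λ₁] [MeasurableSpace Λ₂]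
  [MeasurableSpace Λ₃] [MeasurableSpace Λ₄]
  (μ₁ : Measure Λ₁) (μ₂ : Measure Λ₂) (μ₃ : Measure Λ₃) (μ₄ : Measure Λ₄)
  [IsProbabilityMeasure μ₁] [IsProbabilityMeasure μ₂] [IsProbabilityMeasure μ₃]
  [IsProbabilityMeasure μ₄]
  (r₁ : Response A Λ₄ Λ₁) (r₂ : Response A Λ₁ Λ₂) (r₃ : Response A Λ₂ Λ₃) (r₄ : Response A Λ₃ Λ₄)

/-- A local model of the square as a ring model: every source samples all four hidden variables,
and only the component belonging to that source is read. Source `0` stands for source 4. -/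
noncomputable def RingModel.ofSquare : RingModel A 4 (Λ₁ × Λ₂ × Λ₃ × Λ₄) where
  source := μ₁.prod (μ₂.prod (μ₃.prod μ₄))
  response := ![r₁.comap (g := (·.2.2.2)) (h := (·.1)) (by fun_prop) (by fun_prop),
    r₂.comap (g := (·.1)) (h := (·.2.1)) (by fun_prop) (by fun_prop),
    r₃.comap (g := (·.2.1)) (h := (·.2.2.1)) (by fun_prop) (by fun_prop),
    r₄.comap (g := (·.2.2.1)) (h := (·.2.2.2)) (by fun_prop) (by fun_prop)]

lemma RingModel.measurePreserving_ofSquare :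
    MeasurePreserving
      (fun ω : Fin 4 → Λ₁ × Λ₂ × Λ₃ × Λ₄ => (((ω 1).1, (ω 2).2.1), ((ω 3).2.2.1, (ω 0).2.2.2)))
      (RingModel.ofSquare μ₁ μ₂ μ₃ μ₄ r₁ r₂ r₃ r₄).hidden ((μ₁.prod μ₂).prod (μ₃.prod μ₄)) := by
  set μ := μ₁.prod (μ₂.prod (μ₃.prod μ₄))
  have h₁ : MeasurePreserving (fun x : Λ₁ × Λ₂ × Λ₃ × Λ₄ => x.1) μ μ₁ := measurePreserving_fst
  have h₂ : MeasurePreserving (fun x : Λ₁ × Λ₂ × Λ₃ × Λ₄ => x.2.1) μ μ₂ :=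
    measurePreserving_fst.comp measurePreserving_snd
  have h₃ : MeasurePreserving (fun x : Λ₁ × Λ₂ × Λ₃ × Λ₄ => x.2.2.1) μ μ₃ :=
    measurePreserving_fst.comp (measurePreserving_snd.comp measurePreserving_snd)
  have h₄ : MeasurePreserving (fun x : Λ₁ × Λ₂ × Λ₃ × Λ₄ => x.2.2.2) μ μ₄ :=
    measurePreserving_snd.comp (measurePreserving_snd.comp measurePreserving_snd)
  exact ((h₁.prod h₂).prod (h₃.prod h₄)).comp
    ((RingModel.ofSquare μ₁ μ₂ μ₃ μ₄ r₁ r₂ r₃ r₄).measurePreserving_quadrangle 1)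

lemma RingModel.dist_ofSquare (a₁ a₂ a₃ a₄ : A) :
    (RingModel.ofSquare μ₁ μ₂ μ₃ μ₄ r₁ r₂ r₃ r₄).dist ![a₁, a₂, a₃, a₄] =
      ∫ x₁, ∫ x₂, ∫ x₃, ∫ x₄, r₁.prob a₁ x₄ x₁ * r₂.prob a₂ x₁ x₂ * r₃.prob a₃ x₂ x₃ *
        r₄.prob a₄ x₃ x₄ ∂μ₄ ∂μ₃ ∂μ₂ ∂μ₁ := by
  have hbdd : BoundedMeasurable fun q : (Λ₁ × Λ₂) × (Λ₃ × Λ₄) =>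
      r₁.prob a₁ q.2.2 q.1.1 * r₂.prob a₂ q.1.1 q.1.2 * r₃.prob a₃ q.1.2 q.2.1 *
        r₄.prob a₄ q.2.1 q.2.2 := by fun_prop
  have hcomponents := RingModel.measurePreserving_ofSquare μ₁ μ₂ μ₃ μ₄ r₁ r₂ r₃ r₄
  calc (RingModel.ofSquare μ₁ μ₂ μ₃ μ₄ r₁ r₂ r₃ r₄).dist ![a₁, a₂, a₃, a₄]
      = ∫ q, r₁.prob a₁ q.2.2 q.1.1 * r₂.prob a₂ q.1.1 q.1.2 * r₃.prob a₃ q.1.2 q.2.1 *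
          r₄.prob a₄ q.2.1 q.2.2 ∂(μ₁.prod μ₂).prod (μ₃.prod μ₄) := by
        rw [← hbdd.integral_comp hcomponents]
        refine integral_congr_ae (.of_forall fun ω => ?_)
        simp only [Fin.prod_univ_four]
        rfl
    _ = ∫ p, ∫ q, r₁.prob a₁ q.2 p.1 * r₂.prob a₂ p.1 p.2 * r₃.prob a₃ p.2 q.1 *
          r₄.prob a₄ q.1 q.2 ∂μ₃.prod μ₄ ∂μ₁.prod μ₂ := integral_prod _ hbdd.integrable
    _ = ∫ x₁, ∫ x₂, ∫ q, r₁.prob a₁ q.2 x₁ * r₂.prob a₂ x₁ x₂ * r₃.prob a₃ x₂ q.1 *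
          r₄.prob a₄ q.1 q.2 ∂μ₃.prod μ₄ ∂μ₂ ∂μ₁ :=
        integral_prod _ (hbdd.integral_right _).integrable
    _ = _ := by
        refine integral_congr_ae (.of_forall fun x₁ => integral_congr_ae (.of_forall fun x₂ => ?_))
        exact integral_prod _ (BoundedMeasurable.integrable (by fun_prop))

end Square

theorem stmt_0_general {Λ₁ Λ₂ Λ₃ Λ₄ : Type*} [MeasurableSpace Λ₁] [MeasurableSpace Λ₂]
    [MeasurableSpace Λ₃] [MeasurableSpace Λ₄] (μ₁ : Measure Λ₁) (μ₂ : Measure Λ₂)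
    (μ₃ : Measure Λ₃) (μ₄ : Measure Λ₄) [IsProbabilityMeasure μ₁] [IsProbabilityMeasure μ₂]
    [IsProbabilityMeasure μ₃] [IsProbabilityMeasure μ₄]
    (r₁ : Response Outc Λ₄ Λ₁) (r₂ : Response Outc Λ₁ Λ₂)
    (r₃ : Response Outc Λ₂ Λ₃) (r₄ : Response Outc Λ₃ Λ₄)
    {u : ℝ} (hu : u ^ 2 < 1) (hu' : 1 / 2 < u ^ 4) :
    ¬ ∀ a₁ a₂ a₃ a₄ : Outc, ringP 4 u ![a₁, a₂, a₃, a₄] =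
      ∫ x₁, ∫ x₂, ∫ x₃, ∫ x₄, r₁.prob a₁ x₄ x₁ * r₂.prob a₂ x₁ x₂ * r₃.prob a₃ x₂ x₃ *
        r₄.prob a₄ x₃ x₄ ∂μ₄ ∂μ₃ ∂μ₂ ∂μ₁ := by
  intro h
  refine (RingModel.ofSquare μ₁ μ₂ μ₃ μ₄ r₁ r₂ r₃ r₄).dist_ne_ringP_four hu hu' (funext fun a => ?_)
  have ha : a = ![a 0, a 1, a 2, a 3] := (FinVec.etaExpand_eq a).symm
  rw [ha, RingModel.dist_ofSquare, ← h]

/-- For every real `u` with `0.841 < u < 1`, the square-network quantum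
distribution `P_Q^□` is nonlocal on the square network: no local model with four
independent sources (one per edge of the square) reproduces it. -/
theorem stmt_0 (u : ℝ) (hu : (0.841 : ℝ) < u) (hu1 : u < 1) :
    ¬ ∃ (Λ₁ Λ₂ Λ₃ Λ₄ : Type)
        (m₁ : MeasurableSpace Λ₁) (m₂ : MeasurableSpace Λ₂)
        (m₃ : MeasurableSpace Λ₃) (m₄ : MeasurableSpace Λ₄)
        (μ₁ : @Measure Λ₁ m₁) (μ₂ : @Measure Λ₂ m₂)
        (μ₃ : @Measure Λ₃ m₃) (μ₄ : @Measure Λ₄ m₄)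
        (p₁ : Outc → Λ₄ → Λ₁ → ℝ) (p₂ : Outc → Λ₁ → Λ₂ → ℝ)
        (p₃ : Outc → Λ₂ → Λ₃ → ℝ) (p₄ : Outc → Λ₃ → Λ₄ → ℝ),
      IsProbabilityMeasure μ₁ ∧ IsProbabilityMeasure μ₂ ∧
      IsProbabilityMeasure μ₃ ∧ IsProbabilityMeasure μ₄ ∧
      (∀ a, @Measurable _ _ (m₄.prod m₁) _ fun q : Λ₄ × Λ₁ => p₁ a q.1 q.2) ∧
      (∀ a, @Measurable _ _ (m₁.prod m₂) _ fun q : Λ₁ × Λ₂ => p₂ a q.1 q.2) ∧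
      (∀ a, @Measurable _ _ (m₂.prod m₃) _ fun q : Λ₂ × Λ₃ => p₃ a q.1 q.2) ∧
      (∀ a, @Measurable _ _ (m₃.prod m₄) _ fun q : Λ₃ × Λ₄ => p₄ a q.1 q.2) ∧
      (∀ x y, (∀ a, 0 ≤ p₁ a x y) ∧ ∑ a, p₁ a x y = 1) ∧
      (∀ x y, (∀ a, 0 ≤ p₂ a x y) ∧ ∑ a, p₂ a x y = 1) ∧
      (∀ x y, (∀ a, 0 ≤ p₃ a x y) ∧ ∑ a, p₃ a x y = 1) ∧
      (∀ x y, (∀ a, 0 ≤ p₄ a x y) ∧ ∑ a, p₄ a x y = 1) ∧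
      (∀ a₁ a₂ a₃ a₄ : Outc,
        ringP 4 u ![a₁, a₂, a₃, a₄] =
          ∫ x₁, ∫ x₂, ∫ x₃, ∫ x₄,
            p₁ a₁ x₄ x₁ * p₂ a₂ x₁ x₂ * p₃ a₃ x₂ x₃ * p₄ a₄ x₃ x₄ ∂μ₄ ∂μ₃ ∂μ₂ ∂μ₁) := by
  rintro ⟨Λ₁, Λ₂, Λ₃, Λ₄, _, _, _, _, μ₁, μ₂, μ₃, μ₄, p₁, p₂, p₃, p₄, _, _, _, _,
    hm₁, hm₂, hm₃, hm₄, hp₁, hp₂, hp₃, hp₄, h⟩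
  have hsq : u ^ 2 < 1 := by nlinarith
  have hfourth : 1 / 2 < u ^ 4 :=
    lt_of_lt_of_le (by norm_num) (pow_le_pow_left₀ (by norm_num) hu.le 4)
  exact stmt_0_general μ₁ μ₂ μ₃ μ₄
    ⟨p₁, hm₁, fun a x y => (hp₁ x y).1 a, fun x y => (hp₁ x y).2⟩
    ⟨p₂, hm₂, fun a x y => (hp₂ x y).1 a, fun x y => (hp₂ x y).2⟩
    ⟨p₃, hm₃, fun a x y => (hp₃ x y).1 a, fun x y => (hp₃ x y).2⟩
    ⟨p₄, hm₄, fun a x y => (hp₄ x y).1 a, fun x y => (hp₄ x y).2⟩ hsq hfourth h
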